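/- For every odd integer k ≥ 3 there exists a sequence (f_v)_{v ∈ ℕ}, where f_v is a k-uniform hypergraph property on v vertices, together with constants c, C > 0 and v₀ ∈ ℕ, such that for all v ≥ v₀: c·v^{k/2} ≤ s(f_v) ≤ C·v^{k/2} and bs(f_v) ≥ c·v^{k²/(k+1)}; consequently bs(f_v) ≥ c'·s(f_v)^{2k/(k+1)} for some constant c' > 0 and all v ≥ v₀. -/

import Mathlib

open Finset

/-- The coordinate set: `k`-element subsets of `Fin v`. -/
abbrev KSet (v k : ℕ) : Type := {S : Finset (Fin v) // S.card = k}

/-- A `k`-uniform hypergraph on `Fin v`: a Boolean function on `k`-sets. -/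
abbrev HGraph (v k : ℕ) : Type := KSet v k → Bool

/-- Sensitivity of `f` at input `x`: the number of coordinates whose flip changes `f`. -/
def localSens {I : Type} [Fintype I] [DecidableEq I]
    (f : (I → Bool) → Bool) (x : I → Bool) : ℕ :=
  (Finset.univ.filter fun i => f (Function.update x i (!x i)) ≠ f x).card

/-- Sensitivity of `f`: maximum of `localSens f x` over all inputs `x`. -/
def sens {I : Type} [Fintype I] [DecidableEq I] (f : (I → Bool) → Bool) : ℕ :=
  Finset.univ.sup (localSens f)

/-- `sensOn b f` is `s^b(f)`: max sensitivity over inputs with `f x = b`. -/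
def sensOn {I : Type} [Fintype I] [DecidableEq I] (b : Bool) (f : (I → Bool) → Bool) : ℕ :=
  (Finset.univ.filter fun x => f x = b).sup (localSens f)

/-- Flip all the coordinates of `x` in the block `B`. -/
def flipBlock {I : Type} [DecidableEq I] (x : I → Bool) (B : Finset I) : I → Bool :=
  fun i => if i ∈ B then !x i else x i

/-- Block sensitivity of `f` at `x`: maximum number of pairwise disjoint sensitive blocks. -/
noncomputable def localBlockSens {I : Type} [Fintype I] [DecidableEq I]
    (f : (I → Bool) → Bool) (x : I → Bool) : ℕ :=
  sSup {n : ℕ | ∃ B : Fin n → Finset I,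
    (∀ j, f (flipBlock x (B j)) ≠ f x) ∧
    ∀ j j', j ≠ j' → Disjoint (B j) (B j')}

/-- Block sensitivity of `f`. -/
noncomputable def blockSens {I : Type} [Fintype I] [DecidableEq I]
    (f : (I → Bool) → Bool) : ℕ :=
  Finset.univ.sup (localBlockSens f)

/-- Image of a `k`-set under a permutation of the vertices. -/
def permKSet {v k : ℕ} (σ : Equiv.Perm (Fin v)) (S : KSet v k) : KSet v k :=
  ⟨S.1.map σ.toEmbedding, by rw [Finset.card_map]; exact S.2⟩

/-- A `k`-uniform hypergraph property: invariance under all vertex permutations,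
where `(σ • G) S = G (σ⁻¹ S)`. -/
def IsHypergraphProperty {v k : ℕ} (f : HGraph v k → Bool) : Prop :=
  ∀ (σ : Equiv.Perm (Fin v)) (G : HGraph v k),
    f (fun S => G (permKSet σ⁻¹ S)) = f G

/-!
Fix `j` with `k / 2 < j < k`; for odd `k` the best choice is `j = (k + 1) / 2`. A `t`-set `T` of
vertices is an isolated clique of `G` if, among the `k`-sets meeting `T` in at least `j` vertices,
the edges of `G` are exactly those inside `T`. The property is to contain an isolated clique.

If `G` contains one, on `T`, then only the `O(t ^ j * v ^ (k - j))` `k`-sets meeting `T` in at least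
`j` vertices can be sensitive, and all of them are when `G` is the bare clique on `T`. If `G`
contains none, each sensitive `e` comes with an isolated clique `T_e` of the hypergraph obtained by
flipping `e`, and `T_e` determines `e`. If `T_e ≠ T_e'` shared `j` vertices, then every vertex of
`T_e` would lie in a `k`-set on which the two flipped hypergraphs disagree; but they disagree only
on `e` and `e'`, which cover at most `2 * k < t` vertices. So the `T_e` pairwise share fewer than
`j` vertices, and counting `j`-subsets shows that there are `O((v / t) ^ j)` of them. For
`t = v ^ (1 - k / (2 * j))` both bounds are `v ^ (k / 2)`.

At the empty hypergraph, the cliques on `t`-sets that pairwise share fewer than `k` vertices are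
disjoint sensitive blocks. The graphs of polynomials of degree less than `k` over a prime field with
about `v / t` elements provide `(v / t) ^ k = v ^ (k ^ 2 / (2 * j))` such sets, up to constants.
-/

section Sensitivity

variable {I : Type} [DecidableEq I] {f : (I → Bool) → Bool}

lemma nonempty_of_apply_flipBlock_ne {x : I → Bool} {B : Finset I} (h : f (flipBlock x B) ≠ f x) :
    B.Nonempty := by
  by_contra hB
  rw [not_nonempty_iff_eq_empty] at hB
  exact h (congrArg f (by funext i; simp [flipBlock, hB]))

variable [Fintype I]

lemma localSens_le_sens (f : (I → Bool) → Bool) (x : I → Bool) : localSens f x ≤ sens f :=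
  le_sup (mem_univ x)

lemma sens_le_iff {m : ℕ} : sens f ≤ m ↔ ∀ x, localSens f x ≤ m := by
  simp [sens]

lemma card_le_blockSens {ι : Type*} [Fintype ι] {x : I → Bool} {B : ι → Finset I}
    (hB : ∀ i, f (flipBlock x (B i)) ≠ f x) (hd : Pairwise fun i i' => Disjoint (B i) (B i')) :
    Fintype.card ι ≤ blockSens f := by
  refine le_trans (le_csSup ⟨Fintype.card I, ?_⟩ ?_) (le_sup (f := localBlockSens f) (mem_univ x))
  · rintro n ⟨B, hB, hd⟩
    calc n = #(univ : Finset (Fin n)) := by simp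
      _ ≤ #(univ.biUnion B) :=
        card_le_card_biUnion (fun i _ i' _ hne => hd i i' hne)
          fun i _ => nonempty_of_apply_flipBlock_ne (hB i)
      _ ≤ Fintype.card I := card_le_univ _
  · let e := (Fintype.equivFin ι).symm
    exact ⟨B ∘ e, fun i => hB _, fun i i' hne => hd (e.injective.ne hne)⟩

end Sensitivity

section SetFamilies

variable {α : Type*} [DecidableEq α] {j k t : ℕ}

lemma card_mul_choose_le_choose_of_card_inter_lt [Fintype α] {ι : Type*} {s : Finset ι}
    {T : ι → Finset α} (hT : ∀ i ∈ s, #(T i) = t)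
    (hd : (s : Set ι).Pairwise fun i i' => #(T i ∩ T i') < j) :
    #s * t.choose j ≤ (Fintype.card α).choose j := by
  have hdisj : (s : Set ι).PairwiseDisjoint fun i => powersetCard j (T i) := by
    refine fun i hi i' hi' hne => disjoint_left.2 fun A hA hA' => (hd hi hi' hne).not_ge ?_
    rw [mem_powersetCard] at hA hA'
    exact hA.2 ▸ card_le_card (subset_inter hA.1 hA'.1)
  calc #s * t.choose j = ∑ i ∈ s, #(powersetCard j (T i)) := by
        rw [sum_congr rfl fun i hi => by rw [card_powersetCard, hT i hi], sum_const, smul_eq_mul]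
    _ = #(s.biUnion fun i => powersetCard j (T i)) := (card_biUnion hdisj).symm
    _ ≤ #(powersetCard j (univ : Finset α)) :=
        card_le_card (biUnion_subset.2 fun i _ => powersetCard_mono (subset_univ _))
    _ = (Fintype.card α).choose j := by rw [card_powersetCard, card_univ]

lemma exists_subset_card_inter_not_subset {T T' : Finset α} {y : α} (hj : 0 < j) (hjk : j < k)
    (hkT : k ≤ #T) (hsub : ¬ T ⊆ T') (hcap : j ≤ #(T ∩ T')) (hy : y ∈ T) :
    ∃ S ⊆ T, #S = k ∧ y ∈ S ∧ j ≤ #(S ∩ T') ∧ ¬ S ⊆ T' := by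
  obtain ⟨A, x, hA, hAc, hxT, hxT', hyA⟩ : ∃ (A : Finset α) (x : α),
      A ⊆ T ∩ T' ∧ #A = j ∧ x ∈ T ∧ x ∉ T' ∧ y ∈ insert x A := by
    by_cases hyT' : y ∈ T'
    · obtain ⟨x, hxT, hxT'⟩ := not_subset.1 hsub
      obtain ⟨A, hyA, hA, hAc⟩ := exists_subsuperset_card_eq
        (singleton_subset_iff.2 (mem_inter.2 ⟨hy, hyT'⟩)) (by rwa [card_singleton]) hcap
      exact ⟨A, x, hA, hAc, hxT, hxT', mem_insert_of_mem (singleton_subset_iff.1 hyA)⟩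
    · obtain ⟨A, hA, hAc⟩ := exists_subset_card_eq hcap
      exact ⟨A, y, hA, hAc, hy, hyT', mem_insert_self y A⟩
  obtain ⟨S, hAS, hST, hSc⟩ := exists_subsuperset_card_eq
    (insert_subset hxT (hA.trans inter_subset_left)) ((card_insert_le x A).trans (by omega)) hkT
  have hAST' : A ⊆ S ∩ T' :=
    subset_inter ((subset_insert x A).trans hAS) (hA.trans inter_subset_right)
  exact ⟨S, hST, hSc, hAS hyA, hAc ▸ card_le_card hAST',
    fun h => hxT' (h (hAS (mem_insert_self x A)))⟩

end SetFamilies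

section HeavySets

variable {v k j : ℕ}

/-- The `k`-sets that meet `T` in at least `j` vertices: the coordinates that decide whether `T` is
an isolated clique. -/
def heavySets (k j : ℕ) (T : Finset (Fin v)) : Finset (KSet v k) :=
  univ.filter fun S => j ≤ #(S.1 ∩ T)

lemma mem_heavySets {T : Finset (Fin v)} {S : KSet v k} :
    S ∈ heavySets k j T ↔ j ≤ #(S.1 ∩ T) := by
  simp [heavySets]

lemma mem_heavySets_of_subset (hjk : j ≤ k) {T : Finset (Fin v)} {S : KSet v k} (h : S.1 ⊆ T) :
    S ∈ heavySets k j T := by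
  rwa [mem_heavySets, inter_eq_left.2 h, S.2]

open scoped FinsetFamily in
lemma card_heavySets_le (T : Finset (Fin v)) :
    #(heavySets k j T) ≤ (#T).choose j * v.choose (k - j) := by
  have hsub : (heavySets k j T).map (.subtype _) ⊆
      powersetCard j T ⊻ powersetCard (k - j) univ := by
    intro U hU
    obtain ⟨S, hS, rfl⟩ := mem_map.1 hU
    obtain ⟨A, hA, hAc⟩ := exists_subset_card_eq (mem_heavySets.1 hS)
    have hAS : A ⊆ S.1 := hA.trans inter_subset_left
    refine mem_sups.2 ⟨A, mem_powersetCard.2 ⟨hA.trans inter_subset_right, hAc⟩, S.1 \ A, ?_,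
      union_sdiff_of_subset hAS⟩
    rw [mem_powersetCard_univ, card_sdiff_of_subset hAS, S.2, hAc]
  calc #(heavySets k j T) = #((heavySets k j T).map (.subtype _)) := (card_map _).symm
    _ ≤ #(powersetCard j T ⊻ powersetCard (k - j) univ) := card_le_card hsub
    _ ≤ #(powersetCard j T) * #(powersetCard (k - j) (univ : Finset (Fin v))) := card_sups_le _ _
    _ = (#T).choose j * v.choose (k - j) := by simp

lemma choose_mul_choose_le_card_heavySets (hjk : j ≤ k) (T : Finset (Fin v)) :
    (#T).choose j * (v - #T).choose (k - j) ≤ #(heavySets k j T) := by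
  calc (#T).choose j * (v - #T).choose (k - j)
      = #(powersetCard j T ×ˢ powersetCard (k - j) Tᶜ) := by simp [card_product, card_compl]
    _ ≤ #(heavySets k j T) := by
        refine card_le_card_of_surjOn (fun S => (S.1 ∩ T, S.1 \ T)) ?_
        rintro ⟨A, B⟩ hAB
        simp only [coe_product, Set.mem_prod, mem_coe, mem_powersetCard] at hAB
        obtain ⟨⟨hA, hAc⟩, hB, hBc⟩ := hAB
        have hBT : Disjoint B T := subset_compl_iff_disjoint_right.1 hB
        have hinter : (A ∪ B) ∩ T = A := by
          rw [union_inter_distrib_right, inter_eq_left.2 hA, disjoint_iff_inter_eq_empty.1 hBT,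
            union_empty]
        have hsdiff : (A ∪ B) \ T = B := by
          rw [union_sdiff_distrib, sdiff_eq_empty_iff_subset.2 hA, sdiff_eq_self_of_disjoint hBT,
            empty_union]
        have hcard : #(A ∪ B) = k := by
          rw [card_union_of_disjoint (hBT.symm.mono_left hA), hAc, hBc, Nat.add_sub_cancel' hjk]
        exact ⟨⟨A ∪ B, hcard⟩, mem_heavySets.2 (by rw [hinter, hAc]), Prod.ext hinter hsdiff⟩

end HeavySets

section IsolatedClique

variable {v k j t : ℕ} {G G' : HGraph v k} {T T' : Finset (Fin v)} {e S : KSet v k}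

/-- `T` is an isolated clique of `G` on `t` vertices: among the `k`-sets that meet `T` in at least
`j` vertices, the edges of `G` are exactly those inside `T`. For `j ≤ k` this makes all `k`-subsets
of `T` edges. -/
def IsIsolatedClique (j t : ℕ) (G : HGraph v k) (T : Finset (Fin v)) : Prop :=
  #T = t ∧ ∀ S ∈ heavySets k j T, G S = true ↔ S.1 ⊆ T

open Classical in
/-- The hypergraph property of containing an isolated clique on `t` vertices, which separates
sensitivity from block sensitivity. -/
noncomputable def hasIsolatedClique (v k j t : ℕ) (G : HGraph v k) : Bool :=
  decide (∃ T, IsIsolatedClique j t G T)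

lemma hasIsolatedClique_eq_true :
    hasIsolatedClique v k j t G = true ↔ ∃ T, IsIsolatedClique j t G T := by
  simp [hasIsolatedClique]

lemma permKSet_surjective (σ : Equiv.Perm (Fin v)) :
    Function.Surjective (permKSet (k := k) σ) := fun S =>
  ⟨permKSet σ⁻¹ S, Subtype.ext (by ext; simp [permKSet, Equiv.Perm.inv_def])⟩

lemma permKSet_inv_permKSet (σ : Equiv.Perm (Fin v)) (S : KSet v k) :
    permKSet σ⁻¹ (permKSet σ S) = S :=
  Subtype.ext (by ext; simp [permKSet, Equiv.Perm.inv_def])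

lemma isIsolatedClique_map_iff (σ : Equiv.Perm (Fin v)) :
    IsIsolatedClique j t (fun S => G (permKSet σ⁻¹ S)) (T.map σ.toEmbedding) ↔
      IsIsolatedClique j t G T := by
  rw [IsIsolatedClique, (permKSet_surjective σ).forall]
  simp only [IsIsolatedClique, permKSet_inv_permKSet, mem_heavySets]
  simp only [permKSet, ← map_inter, card_map, map_subset_map]

lemma isHypergraphProperty_hasIsolatedClique (v k j t : ℕ) :
    IsHypergraphProperty (hasIsolatedClique v k j t) := by
  intro σ G
  rw [Bool.eq_iff_iff, hasIsolatedClique_eq_true, hasIsolatedClique_eq_true]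
  exact (σ.finsetCongr.exists_congr fun T => (isIsolatedClique_map_iff σ).symm).symm

namespace IsIsolatedClique

lemma apply_of_subset (h : IsIsolatedClique j t G T) (hjk : j ≤ k) (hS : S.1 ⊆ T) : G S = true :=
  (h.2 S (mem_heavySets_of_subset hjk hS)).2 hS

lemma apply_eq (h : IsIsolatedClique j t G T) (h' : IsIsolatedClique j t G' T)
    (hS : S ∈ heavySets k j T) : G S = G' S :=
  Bool.eq_iff_iff.2 ((h.2 S hS).trans (h'.2 S hS).symm)

lemma update (h : IsIsolatedClique j t G T) (he : e ∉ heavySets k j T) (b : Bool) :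
    IsIsolatedClique j t (Function.update G e b) T := by
  refine ⟨h.1, fun S hS => ?_⟩
  rw [Function.update_of_ne (ne_of_mem_of_not_mem hS he)]
  exact h.2 S hS

lemma le_card_ne_mul (hj : 0 < j) (hjk : j < k) (hkt : k ≤ t) (h : IsIsolatedClique j t G T)
    (h' : IsIsolatedClique j t G' T') (hne : T ≠ T') (hcap : j ≤ #(T ∩ T')) :
    t ≤ #{S | G S ≠ G' S} * k := by
  have hsub : ¬ T ⊆ T' := fun hsub => hne (eq_of_subset_of_card_le hsub (h'.1.trans h.1.symm).le)
  have hcover : T ⊆ ({S | G S ≠ G' S} : Finset (KSet v k)).biUnion Subtype.val := by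
    intro y hy
    obtain ⟨S, hST, hSc, hyS, hST', hnot⟩ :=
      exists_subset_card_inter_not_subset hj hjk (hkt.trans h.1.ge) hsub hcap hy
    refine mem_biUnion.2 ⟨⟨S, hSc⟩, mem_filter.2 ⟨mem_univ _, fun heq => hnot ?_⟩, hyS⟩
    exact (h'.2 ⟨S, hSc⟩ (mem_heavySets.2 hST')).1 (heq ▸ h.apply_of_subset hjk.le hST)
  calc t = #T := h.1.symm
    _ ≤ _ := card_le_card hcover
    _ ≤ _ := card_biUnion_le_card_mul _ _ _ fun S _ => S.2.le

lemma localSens_le (h : IsIsolatedClique j t G T) :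
    localSens (hasIsolatedClique v k j t) G ≤ #(heavySets k j T) := by
  refine card_le_card fun e he => ?_
  by_contra hlight
  refine (mem_filter.1 he).2 ?_
  rw [hasIsolatedClique_eq_true.2 ⟨T, h⟩, hasIsolatedClique_eq_true]
  exact ⟨T, h.update hlight _⟩

end IsIsolatedClique

lemma filter_update_ne_update_subset (G : HGraph v k) (e e' : KSet v k) (b b' : Bool) :
    ({S | Function.update G e b S ≠ Function.update G e' b' S} : Finset (KSet v k)) ⊆ {e, e'} := by
  intro S hS
  by_contra hmem
  simp only [mem_insert, mem_singleton, not_or] at hmem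
  simp [Function.update_of_ne hmem.1, Function.update_of_ne hmem.2] at hS

lemma mem_heavySets_of_isIsolatedClique_update {b : Bool} (hG : ¬ IsIsolatedClique j t G T)
    (h : IsIsolatedClique j t (Function.update G e b) T) : e ∈ heavySets k j T := by
  by_contra hlight
  exact hG (by simpa using h.update hlight (G e))

lemma card_inter_lt_of_isIsolatedClique_update (hj : 0 < j) (hjk : j < k) (ht : 2 * k < t)
    {e' : KSet v k} {b b' : Bool} (h : IsIsolatedClique j t (Function.update G e b) T)
    (h' : IsIsolatedClique j t (Function.update G e' b') T') (hne : T ≠ T') : #(T ∩ T') < j := by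
  by_contra! hcap
  have hdiff := (card_le_card (filter_update_ne_update_subset G e e' b b')).trans card_le_two
  have hle := (h.le_card_ne_mul hj hjk (by omega) h' hne hcap).trans (Nat.mul_le_mul_right k hdiff)
  omega

lemma ne_of_isIsolatedClique_update_not (hG : ¬ IsIsolatedClique j t G T) {e' : KSet v k}
    (hne : e ≠ e') (h : IsIsolatedClique j t (Function.update G e (!G e)) T)
    (h' : IsIsolatedClique j t (Function.update G e' (!G e')) T') : T ≠ T' := by
  rintro rfl
  simpa [Function.update_of_ne hne] using
    h.apply_eq h' (mem_heavySets_of_isIsolatedClique_update hG h)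

lemma localSens_hasIsolatedClique_mul_choose_le (hj : 0 < j) (hjk : j < k) (ht : 2 * k < t)
    (hG : ∀ T, ¬ IsIsolatedClique j t G T) :
    localSens (hasIsolatedClique v k j t) G * t.choose j ≤ v.choose j := by
  have hsens : ∀ e ∈ univ.filter fun e => hasIsolatedClique v k j t (Function.update G e (!G e)) ≠
      hasIsolatedClique v k j t G,
      ∃ T, IsIsolatedClique j t (Function.update G e (!G e)) T := by
    intro e he
    simpa [hasIsolatedClique, hG] using (mem_filter.1 he).2
  choose! T hT using hsens
  simpa only [localSens, Fintype.card_fin] using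
    card_mul_choose_le_choose_of_card_inter_lt (fun e he => (hT e he).1) fun e he e' he' hne =>
      card_inter_lt_of_isIsolatedClique_update hj hjk ht (hT e he) (hT e' he')
        (ne_of_isIsolatedClique_update_not (hG _) hne (hT e he) (hT e' he'))

theorem sens_hasIsolatedClique_le (hj : 0 < j) (hjk : j < k) (ht : 2 * k < t) :
    sens (hasIsolatedClique v k j t) ≤
      max (t.choose j * v.choose (k - j)) (v.choose j / t.choose j) := by
  refine sens_le_iff.2 fun G => ?_
  by_cases hG : ∃ T, IsIsolatedClique j t G T
  · obtain ⟨T, hT⟩ := hG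
    exact le_max_of_le_left (hT.localSens_le.trans (hT.1 ▸ card_heavySets_le T))
  · refine le_max_of_le_right ((Nat.le_div_iff_mul_le (Nat.choose_pos (by omega))).2 ?_)
    exact localSens_hasIsolatedClique_mul_choose_le hj hjk ht (not_exists.1 hG)

/-- The hypergraph whose edges are the `k`-subsets of `T`, an input of largest sensitivity up to a
constant factor. -/
def cliqueOn (k : ℕ) (T : Finset (Fin v)) : HGraph v k := fun S => decide (S.1 ⊆ T)

lemma isIsolatedClique_cliqueOn (hT : #T = t) : IsIsolatedClique j t (cliqueOn k T) T :=
  ⟨hT, fun S _ => by simp [cliqueOn]⟩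

lemma hasIsolatedClique_cliqueOn (hT : #T = t) :
    hasIsolatedClique v k j t (cliqueOn k T) = true :=
  hasIsolatedClique_eq_true.2 ⟨T, isIsolatedClique_cliqueOn hT⟩

lemma eq_of_isIsolatedClique_update_cliqueOn (hj : 0 < j) (hjk : j < k) (ht : 2 * k < t)
    (hT : #T = t) {b : Bool} (h : IsIsolatedClique j t (Function.update (cliqueOn k T) e b) T') :
    T' = T := by
  have hclique : IsIsolatedClique j t (Function.update (cliqueOn k T) e (cliqueOn k T e)) T := by
    simpa only [Function.update_eq_self] using isIsolatedClique_cliqueOn hT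
  obtain ⟨x, hx⟩ : e.1.Nonempty := card_pos.1 (by rw [e.2]; omega)
  obtain ⟨S, hST', hSk⟩ : ∃ S ⊆ T'.erase x, #S = k :=
    exists_subset_card_eq (le_trans (by rw [h.1]; omega) pred_card_le_card_erase)
  have hSe : (⟨S, hSk⟩ : KSet v k) ≠ e := by
    rintro rfl
    exact notMem_erase x T' (hST' hx)
  have hST : S ⊆ T := by
    have hedge := h.apply_of_subset (S := ⟨S, hSk⟩) hjk.le (hST'.trans (erase_subset x T'))
    simpa [Function.update_of_ne hSe, cliqueOn] using hedge
  by_contra hne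
  have hcap := card_inter_lt_of_isIsolatedClique_update hj hjk ht h hclique hne
  have hle := card_le_card (subset_inter (hST'.trans (erase_subset x T')) hST)
  omega

lemma hasIsolatedClique_update_cliqueOn (hj : 0 < j) (hjk : j < k) (ht : 2 * k < t)
    (hT : #T = t) (he : e ∈ heavySets k j T) :
    hasIsolatedClique v k j t (Function.update (cliqueOn k T) e (!cliqueOn k T e)) = false := by
  rw [← Bool.not_eq_true, hasIsolatedClique_eq_true]
  rintro ⟨T', h⟩
  obtain rfl := eq_of_isIsolatedClique_update_cliqueOn hj hjk ht hT h
  simpa using h.apply_eq (isIsolatedClique_cliqueOn hT) he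

theorem choose_mul_choose_le_sens_hasIsolatedClique (hj : 0 < j) (hjk : j < k) (ht : 2 * k < t)
    (htv : t ≤ v) :
    t.choose j * (v - t).choose (k - j) ≤ sens (hasIsolatedClique v k j t) := by
  obtain ⟨T, -, hT⟩ := exists_subset_card_eq (s := (univ : Finset (Fin v))) (n := t) (by simpa)
  calc t.choose j * (v - t).choose (k - j) ≤ #(heavySets k j T) :=
        hT ▸ choose_mul_choose_le_card_heavySets hjk.le T
    _ ≤ localSens (hasIsolatedClique v k j t) (cliqueOn k T) :=
        card_le_card fun e he => by
          simp [hasIsolatedClique_update_cliqueOn hj hjk ht hT he, hasIsolatedClique_cliqueOn hT]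
    _ ≤ sens (hasIsolatedClique v k j t) := localSens_le_sens _ _

lemma hasIsolatedClique_empty (hjk : j ≤ k) (hkt : k ≤ t) :
    hasIsolatedClique v k j t (fun _ => false) = false := by
  rw [← Bool.not_eq_true, hasIsolatedClique_eq_true]
  rintro ⟨T, hT⟩
  obtain ⟨S, hST, hSk⟩ := exists_subset_card_eq (hkt.trans_eq hT.1.symm)
  exact Bool.false_ne_true (hT.apply_of_subset (S := ⟨S, hSk⟩) hjk hST)

lemma flipBlock_empty_filter_subset (T : Finset (Fin v)) :
    flipBlock (fun _ => false) (univ.filter fun S : KSet v k => S.1 ⊆ T) = cliqueOn k T := by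
  funext S
  simp [flipBlock, cliqueOn]

theorem card_le_blockSens_hasIsolatedClique {ι : Type*} [Fintype ι] (hjk : j ≤ k) (hkt : k ≤ t)
    {T : ι → Finset (Fin v)} (hT : ∀ i, #(T i) = t)
    (hd : Pairwise fun i i' => #(T i ∩ T i') < k) :
    Fintype.card ι ≤ blockSens (hasIsolatedClique v k j t) := by
  refine card_le_blockSens (x := fun _ => false)
    (B := fun i => univ.filter fun S => S.1 ⊆ T i) (fun i => ?_) fun i i' hne => ?_
  · rw [flipBlock_empty_filter_subset, hasIsolatedClique_cliqueOn (hT i),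
      hasIsolatedClique_empty hjk hkt]
    exact Bool.false_ne_true.symm
  · refine disjoint_left.2 fun S hS hS' => (hd hne).not_ge ?_
    exact S.2 ▸ card_le_card (subset_inter (mem_filter.1 hS).2 (mem_filter.1 hS').2)

end IsolatedClique

section ReedSolomon

open Polynomial

variable {F ι : Type*} [Field F]

/-- The graph of `p` over the evaluation points `x i`, i.e. the Reed–Solomon codeword of `p` as a
set of pairs (position, symbol). -/
def evalGraph [Fintype ι] (x : ι → F) (p : F[X]) : Finset (ι × F) :=
  univ.map ⟨fun i => (i, p.eval (x i)), fun _ _ h => congrArg Prod.fst h⟩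

lemma card_evalGraph [Fintype ι] (x : ι → F) (p : F[X]) : #(evalGraph x p) = Fintype.card ι := by
  rw [evalGraph, card_map, card_univ]

lemma mem_evalGraph [Fintype ι] {x : ι → F} {p : F[X]} {a : ι × F} :
    a ∈ evalGraph x p ↔ p.eval (x a.1) = a.2 := by
  rw [evalGraph, mem_map]
  exact ⟨by rintro ⟨i, -, rfl⟩; rfl, fun h => ⟨a.1, mem_univ _, Prod.ext rfl h⟩⟩

lemma card_evalGraph_inter_lt [Fintype ι] [DecidableEq ι] [DecidableEq F] {k : ℕ} {x : ι → F}
    (hx : Function.Injective x) {p q : F[X]} (hp : p ∈ degreeLT F k) (hq : q ∈ degreeLT F k)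
    (hne : p ≠ q) : #(evalGraph x p ∩ evalGraph x q) < k := by
  by_contra! hle
  let s : Finset ι := univ.filter fun i => p.eval (x i) = q.eval (x i)
  have hs : k ≤ #s := by
    refine hle.trans (card_le_card_of_injOn Prod.fst (fun a ha => ?_) fun a ha b hb hab => ?_)
    · rw [mem_coe, mem_inter, mem_evalGraph, mem_evalGraph] at ha
      simp [s, ha.1, ha.2]
    · rw [mem_coe, mem_inter, mem_evalGraph] at ha hb
      exact Prod.ext hab (by rw [← ha.1, ← hb.1, hab])
  have hdeg : ∀ {r : F[X]}, r ∈ degreeLT F k → r.degree < #s := fun hr =>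
    (mem_degreeLT.1 hr).trans_le (by exact_mod_cast hs)
  exact hne (eq_of_degrees_lt_of_eval_index_eq s hx.injOn (hdeg hp) (hdeg hq)
    fun i hi => (mem_filter.1 hi).2)

lemma exists_pairwise_card_inter_lt [Fintype F] {α : Type*} [Fintype α] [DecidableEq α] (k : ℕ)
    {t : ℕ} (ht : t ≤ Fintype.card F) (hα : t * Fintype.card F ≤ Fintype.card α) :
    ∃ T : (Fin k → F) → Finset α, (∀ i, #(T i) = t) ∧
      Pairwise fun i i' => #(T i ∩ T i') < k := by
  classical
  obtain ⟨x⟩ : Nonempty (Fin t ↪ F) := Function.Embedding.nonempty_of_card_le (by simpa)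
  obtain ⟨φ⟩ : Nonempty (Fin t × F ↪ α) := Function.Embedding.nonempty_of_card_le (by simpa)
  let p : (Fin k → F) ≃ degreeLT F k := (degreeLTEquiv F k).symm.toEquiv
  refine ⟨fun i => (evalGraph x (p i).1).map φ, fun i => ?_, fun i i' hne => ?_⟩
  · rw [card_map, card_evalGraph, Fintype.card_fin]
  · beta_reduce
    rw [← map_inter, card_map]
    exact card_evalGraph_inter_lt x.injective (p i).2 (p i').2
      (Subtype.coe_ne_coe.2 (p.injective.ne hne))

end ReedSolomon

section Asymptotics

open Filter Asymptotics

lemma div_pow_le_blockSens_hasIsolatedClique {v k j t : ℕ} (hjk : j ≤ k) (hkt : k ≤ t) (ht : 0 < t)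
    (htv : 2 * t ^ 2 ≤ v) :
    ((v : ℝ) / t) ^ k ≤ 2 ^ k * blockSens (hasIsolatedClique v k j t) := by
  have htm : t ≤ v / (2 * t) := (Nat.le_div_iff_mul_le (by positivity)).2 (by linarith)
  obtain ⟨q, hq, hmq, hqm⟩ := Nat.exists_prime_lt_and_le_two_mul (v / (2 * t)) (by omega)
  have : Fact q.Prime := ⟨hq⟩
  have htq : t * q ≤ v := by
    calc t * q ≤ t * (2 * (v / (2 * t))) := by gcongr
      _ = v / (2 * t) * (2 * t) := by ring
      _ ≤ v := Nat.div_mul_le_self v (2 * t)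
  obtain ⟨T, hT, hd⟩ := exists_pairwise_card_inter_lt (F := ZMod q) (α := Fin v) k (t := t)
    (by rw [ZMod.card]; omega) (by rwa [ZMod.card, Fintype.card_fin])
  have hbs : q ^ k ≤ blockSens (hasIsolatedClique v k j t) := by
    simpa [ZMod.card] using card_le_blockSens_hasIsolatedClique hjk hkt hT hd
  have hvq : (v : ℝ) / t ≤ 2 * q := by
    rw [div_le_iff₀ (by positivity)]
    have hlt : v < q * (2 * t) := (Nat.div_lt_iff_lt_mul (by positivity)).1 hmq
    exact_mod_cast hlt.le.trans_eq (by ring)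
  calc ((v : ℝ) / t) ^ k ≤ (2 * q) ^ k := by gcongr
    _ = 2 ^ k * (q ^ k : ℕ) := by push_cast; ring
    _ ≤ 2 ^ k * blockSens (hasIsolatedClique v k j t) := by gcongr

variable {k j : ℕ} {t : ℕ → ℕ} {g : ℕ → ℝ}

lemma isTheta_choose_comp (m : ℕ) (ht : Tendsto t atTop atTop) :
    (fun v => ((t v).choose m : ℝ)) =Θ[atTop] fun v => (t v : ℝ) ^ m :=
  ⟨(isTheta_choose m).isBigO.comp_tendsto ht, (isTheta_choose m).isBigO_symm.comp_tendsto ht⟩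

lemma isBigO_sens_hasIsolatedClique (hj : 0 < j) (hjk : j < k) (ht : Tendsto t atTop atTop)
    (h₁ : (fun v : ℕ => (t v : ℝ) ^ j * (v : ℝ) ^ (k - j)) =O[atTop] g)
    (h₂ : (fun v : ℕ => ((v : ℝ) / t v) ^ j) =O[atTop] g) :
    (fun v => (sens (hasIsolatedClique v k j (t v)) : ℝ)) =O[atTop] g := by
  have hchoose : (fun v => ((t v).choose j : ℝ)) =Θ[atTop] fun v => (t v : ℝ) ^ j :=
    isTheta_choose_comp j ht
  have hA : (fun v => ((t v).choose j : ℝ) * (v.choose (k - j) : ℝ)) =O[atTop] g :=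
    (hchoose.mul (isTheta_choose (k - j))).isBigO.trans h₁
  have hB : (fun v => (v.choose j : ℝ) / ((t v).choose j : ℝ)) =O[atTop] g :=
    ((isTheta_choose j).div hchoose).isBigO.trans (by simpa only [div_pow] using h₂)
  refine IsBigO.trans (IsBigO.of_bound' ?_) (hA.add hB)
  filter_upwards [ht.eventually_gt_atTop (2 * k)] with v hv
  rw [Real.norm_of_nonneg (by positivity), Real.norm_of_nonneg (by positivity)]
  calc (sens (hasIsolatedClique v k j (t v)) : ℝ)
      ≤ ((t v).choose j * v.choose (k - j) + v.choose j / (t v).choose j : ℕ) := by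
        exact_mod_cast (sens_hasIsolatedClique_le hj hjk hv).trans
          (max_le (Nat.le_add_right _ _) (Nat.le_add_left _ _))
    _ ≤ (t v).choose j * v.choose (k - j) + v.choose j / (t v).choose j := by
        push_cast
        gcongr
        exact Nat.cast_div_le

lemma pow_mul_pow_isBigO_sens_hasIsolatedClique (hj : 0 < j) (hjk : j < k)
    (ht : Tendsto t atTop atTop) (htv : ∀ᶠ v in atTop, 2 * t v ≤ v) :
    (fun v : ℕ => (t v : ℝ) ^ j * (v : ℝ) ^ (k - j)) =O[atTop]
      fun v => (sens (hasIsolatedClique v k j (t v)) : ℝ) := by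
  have hsub : Tendsto (fun v => v - t v) atTop atTop := tendsto_atTop.2 fun b => by
    filter_upwards [htv, eventually_ge_atTop (2 * b)] with v htv hv
    omega
  have hhalf : (fun v : ℕ => (v : ℝ)) =O[atTop] fun v => ((v - t v : ℕ) : ℝ) := by
    refine IsBigO.of_bound 2 (htv.mono fun v hv => ?_)
    rw [Real.norm_natCast, Real.norm_natCast]
    exact_mod_cast show v ≤ 2 * (v - t v) by omega
  have hchoose : (fun v : ℕ => (t v : ℝ) ^ j * (v : ℝ) ^ (k - j)) =O[atTop]
      fun v => ((t v).choose j : ℝ) * ((v - t v).choose (k - j) : ℝ) :=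
    (isTheta_choose_comp j ht).isBigO_symm.mul
      ((hhalf.pow (k - j)).trans (isTheta_choose_comp (k - j) hsub).isBigO_symm)
  refine hchoose.trans (IsBigO.of_bound' ?_)
  filter_upwards [htv, ht.eventually_gt_atTop (2 * k)] with v htv hv
  rw [Real.norm_of_nonneg (by positivity), Real.norm_natCast]
  exact_mod_cast choose_mul_choose_le_sens_hasIsolatedClique hj hjk hv (by omega)

lemma div_pow_isBigO_blockSens_hasIsolatedClique (hjk : j ≤ k) (ht : Tendsto t atTop atTop)
    (htv : ∀ᶠ v in atTop, 2 * t v ^ 2 ≤ v) :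
    (fun v : ℕ => ((v : ℝ) / t v) ^ k) =O[atTop]
      fun v => (blockSens (hasIsolatedClique v k j (t v)) : ℝ) := by
  refine IsBigO.of_bound (2 ^ k) ?_
  filter_upwards [htv, ht.eventually_ge_atTop k, ht.eventually_gt_atTop 0] with v htv hkt ht
  rw [Real.norm_of_nonneg (by positivity), Real.norm_of_nonneg (by positivity)]
  exact div_pow_le_blockSens_hasIsolatedClique hjk hkt ht htv

lemma isTheta_floor_rpow {α : ℝ} (hα : 0 < α) :
    (fun v : ℕ => (⌊(v : ℝ) ^ α⌋₊ : ℝ)) =Θ[atTop] fun v => (v : ℝ) ^ α :=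
  (isEquivalent_nat_floor.comp_tendsto
    ((tendsto_rpow_atTop hα).comp tendsto_natCast_atTop_atTop)).isTheta

lemma isTheta_floor_rpow_pow_mul_pow {α : ℝ} (hα : 0 < α) (m n : ℕ) :
    (fun v : ℕ => (⌊(v : ℝ) ^ α⌋₊ : ℝ) ^ m * (v : ℝ) ^ n) =Θ[atTop]
      fun v => (v : ℝ) ^ (α * m + n) := by
  refine (((isTheta_floor_rpow hα).pow m).mul (isTheta_refl _ _)).trans_eventuallyEq ?_
  filter_upwards [eventually_gt_atTop 0] with v hv
  rw [Real.rpow_add (by positivity), Real.rpow_mul_natCast (by positivity), Real.rpow_natCast]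

lemma isTheta_div_floor_rpow_pow {α : ℝ} (hα : 0 < α) (n : ℕ) :
    (fun v : ℕ => ((v : ℝ) / ⌊(v : ℝ) ^ α⌋₊) ^ n) =Θ[atTop]
      fun v => (v : ℝ) ^ ((1 - α) * n) := by
  refine (((isTheta_refl _ _).div (isTheta_floor_rpow hα)).pow n).trans_eventuallyEq ?_
  filter_upwards [eventually_gt_atTop 0] with v hv
  rw [Real.rpow_mul_natCast (by positivity), Real.rpow_sub (by positivity), Real.rpow_one]

lemma eventually_two_mul_floor_rpow_sq_le {α : ℝ} (hα : α < 1 / 2) :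
    ∀ᶠ v : ℕ in atTop, 2 * ⌊(v : ℝ) ^ α⌋₊ ^ 2 ≤ v := by
  have hlarge : ∀ᶠ v : ℕ in atTop, (2 : ℝ) ≤ (v : ℝ) ^ (1 - 2 * α) :=
    ((tendsto_rpow_atTop (by linarith)).comp tendsto_natCast_atTop_atTop).eventually_ge_atTop 2
  filter_upwards [hlarge, eventually_gt_atTop 0] with v hv hpos
  have hreal : 2 * (⌊(v : ℝ) ^ α⌋₊ : ℝ) ^ 2 ≤ v := by
    calc 2 * (⌊(v : ℝ) ^ α⌋₊ : ℝ) ^ 2 ≤ (v : ℝ) ^ (1 - 2 * α) * ((v : ℝ) ^ α) ^ 2 := by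
          gcongr
          exact Nat.floor_le (by positivity)
      _ = (v : ℝ) := by
          rw [← Real.rpow_mul_natCast (by positivity), ← Real.rpow_add (by positivity)]
          norm_num [mul_comm]
  exact_mod_cast hreal

/-- The order `⌊v ^ (1 - k / (2 * j))⌋₊` of the isolated clique sought among `v` vertices. The
exponent makes the two contributions `t ^ j * v ^ (k - j)` and `(v / t) ^ j` to the sensitivity
coincide. -/
noncomputable def cliqueSize (k j v : ℕ) : ℕ := ⌊(v : ℝ) ^ (1 - (k : ℝ) / (2 * j))⌋₊

lemma one_sub_div_two_mul_pos (hkj : k < 2 * j) : 0 < 1 - (k : ℝ) / (2 * j) := by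
  have hj : 0 < j := by omega
  exact sub_pos.2 ((div_lt_one (by positivity)).2 (by exact_mod_cast hkj))

lemma tendsto_cliqueSize (hkj : k < 2 * j) : Tendsto (cliqueSize k j) atTop atTop :=
  tendsto_nat_floor_atTop.comp
    ((tendsto_rpow_atTop (one_sub_div_two_mul_pos hkj)).comp tendsto_natCast_atTop_atTop)

lemma eventually_two_mul_cliqueSize_sq_le (hj : 0 < j) (hjk : j < k) :
    ∀ᶠ v in atTop, 2 * cliqueSize k j v ^ 2 ≤ v := by
  refine eventually_two_mul_floor_rpow_sq_le ?_
  rw [sub_lt_comm, lt_div_iff₀ (by positivity)]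
  have hjk' : (j : ℝ) < k := by exact_mod_cast hjk
  linarith

lemma isTheta_div_cliqueSize_pow (hkj : k < 2 * j) (n : ℕ) :
    (fun v : ℕ => ((v : ℝ) / cliqueSize k j v) ^ n) =Θ[atTop]
      fun v => (v : ℝ) ^ ((k : ℝ) / (2 * j) * n) := by
  simpa only [cliqueSize, sub_sub_cancel] using
    isTheta_div_floor_rpow_pow (one_sub_div_two_mul_pos hkj) n

theorem isTheta_sens_hasIsolatedClique_cliqueSize (hkj : k < 2 * j) (hjk : j < k) :
    (fun v => (sens (hasIsolatedClique v k j (cliqueSize k j v)) : ℝ)) =Θ[atTop]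
      fun v => (v : ℝ) ^ ((k : ℝ) / 2) := by
  have hj : 0 < j := by omega
  have hheavy : (fun v : ℕ => (cliqueSize k j v : ℝ) ^ j * (v : ℝ) ^ (k - j)) =Θ[atTop]
      fun v => (v : ℝ) ^ ((k : ℝ) / 2) := by
    have hexp : (1 - (k : ℝ) / (2 * j)) * j + (k - j : ℕ) = k / 2 := by
      rw [Nat.cast_sub hjk.le]
      field_simp
      ring
    simpa only [cliqueSize, hexp] using
      isTheta_floor_rpow_pow_mul_pow (one_sub_div_two_mul_pos hkj) j (k - j)
  have hlight : (fun v : ℕ => ((v : ℝ) / cliqueSize k j v) ^ j) =Θ[atTop]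
      fun v => (v : ℝ) ^ ((k : ℝ) / 2) := by
    have hexp : (k : ℝ) / (2 * j) * j = k / 2 := by field_simp
    simpa only [hexp] using isTheta_div_cliqueSize_pow hkj j
  have htv : ∀ᶠ v in atTop, 2 * cliqueSize k j v ≤ v :=
    (eventually_two_mul_cliqueSize_sq_le hj hjk).mono fun v hv =>
      (Nat.mul_le_mul_left 2 (Nat.le_self_pow two_ne_zero _)).trans hv
  have ht := tendsto_cliqueSize hkj
  exact ⟨isBigO_sens_hasIsolatedClique hj hjk ht hheavy.isBigO hlight.isBigO,
    hheavy.isBigO_symm.trans (pow_mul_pow_isBigO_sens_hasIsolatedClique hj hjk ht htv)⟩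

theorem rpow_isBigO_blockSens_hasIsolatedClique_cliqueSize (hkj : k < 2 * j) (hjk : j < k) :
    (fun v : ℕ => (v : ℝ) ^ ((k : ℝ) ^ 2 / (2 * j))) =O[atTop]
      fun v => (blockSens (hasIsolatedClique v k j (cliqueSize k j v)) : ℝ) := by
  have hdiv := isTheta_div_cliqueSize_pow hkj k
  rw [div_mul_eq_mul_div, ← sq] at hdiv
  exact hdiv.isBigO_symm.trans <| div_pow_isBigO_blockSens_hasIsolatedClique hjk.le
    (tendsto_cliqueSize hkj) (eventually_two_mul_cliqueSize_sq_le (by omega) hjk)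

theorem sens_rpow_isBigO_blockSens_hasIsolatedClique_cliqueSize (hkj : k < 2 * j) (hjk : j < k) :
    (fun v => (sens (hasIsolatedClique v k j (cliqueSize k j v)) : ℝ) ^ ((k : ℝ) / j)) =O[atTop]
      fun v => (blockSens (hasIsolatedClique v k j (cliqueSize k j v)) : ℝ) := by
  refine (((isTheta_sens_hasIsolatedClique_cliqueSize hkj hjk).isBigO.rpow (by positivity)
    (.of_forall fun v => by positivity)).congr_right fun v => ?_).trans
    (rpow_isBigO_blockSens_hasIsolatedClique_cliqueSize hkj hjk)
  rw [← Real.rpow_mul (by positivity), div_mul_div_comm, ← sq]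

lemma exists_pos_eventually_mul_le {f : ℕ → ℝ} (h : f =O[atTop] g) (hg : ∀ v, 0 ≤ g v) :
    ∃ c : ℝ, 0 < c ∧ ∀ᶠ v in atTop, c * f v ≤ g v := by
  obtain ⟨C, hC, hfg⟩ := h.exists_pos
  refine ⟨C⁻¹, inv_pos.2 hC, hfg.bound.mono fun v hv => ?_⟩
  rw [Real.norm_of_nonneg (hg v)] at hv
  exact (inv_mul_le_iff₀ hC).2 ((Real.le_norm_self _).trans hv)

end Asymptotics

theorem stmt15_general {k j : ℕ} (hkj : k < 2 * j) (hjk : j < k) :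
    ∃ f : (v : ℕ) → (HGraph v k → Bool),
      (∀ v, IsHypergraphProperty (f v)) ∧
      ∃ c C : ℝ, 0 < c ∧ 0 < C ∧ ∃ v₀ : ℕ,
        (∀ v : ℕ, v₀ ≤ v →
          c * (v : ℝ) ^ ((k : ℝ) / 2) ≤ (sens (f v) : ℝ) ∧
          (sens (f v) : ℝ) ≤ C * (v : ℝ) ^ ((k : ℝ) / 2) ∧
          c * (v : ℝ) ^ ((k : ℝ) ^ 2 / (2 * (j : ℝ))) ≤ (blockSens (f v) : ℝ)) ∧
        ∃ c' : ℝ, 0 < c' ∧ ∀ v : ℕ, v₀ ≤ v →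
          c' * (sens (f v) : ℝ) ^ ((k : ℝ) / j) ≤ (blockSens (f v) : ℝ) := by
  have hsens := isTheta_sens_hasIsolatedClique_cliqueSize hkj hjk
  obtain ⟨C, hC, hupper⟩ := exists_pos_eventually_mul_le hsens.isBigO fun v => by positivity
  obtain ⟨c₁, hc₁, hlower⟩ := exists_pos_eventually_mul_le hsens.isBigO_symm fun v => by positivity
  obtain ⟨c₂, hc₂, hblock⟩ := exists_pos_eventually_mul_le
    (rpow_isBigO_blockSens_hasIsolatedClique_cliqueSize hkj hjk) fun v => by positivity
  obtain ⟨c', hc', hgap⟩ := exists_pos_eventually_mul_le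
    (sens_rpow_isBigO_blockSens_hasIsolatedClique_cliqueSize hkj hjk) fun v => by positivity
  obtain ⟨v₀, hv₀⟩ := Filter.eventually_atTop.1 (hupper.and (hlower.and (hblock.and hgap)))
  refine ⟨fun v => hasIsolatedClique v k j (cliqueSize k j v),
    fun v => isHypergraphProperty_hasIsolatedClique v k j _, min c₁ c₂, C⁻¹, lt_min hc₁ hc₂,
    inv_pos.2 hC, v₀, fun v hv => ?_, c', hc', fun v hv => (hv₀ v hv).2.2.2⟩
  obtain ⟨hupper, hlower, hblock, -⟩ := hv₀ v hv
  refine ⟨le_trans ?_ hlower, (le_inv_mul_iff₀ hC).2 hupper, le_trans ?_ hblock⟩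
  · gcongr
    exact min_le_left _ _
  · gcongr
    exact min_le_right _ _

theorem stmt15 (k : ℕ) (hk : 3 ≤ k) (hko : Odd k) :
    ∃ f : (v : ℕ) → (HGraph v k → Bool),
      (∀ v, IsHypergraphProperty (f v)) ∧
      ∃ c C : ℝ, 0 < c ∧ 0 < C ∧ ∃ v₀ : ℕ,
        (∀ v : ℕ, v₀ ≤ v →
          c * (v : ℝ) ^ ((k : ℝ) / 2) ≤ (sens (f v) : ℝ) ∧
          (sens (f v) : ℝ) ≤ C * (v : ℝ) ^ ((k : ℝ) / 2) ∧
          c * (v : ℝ) ^ ((k : ℝ) ^ 2 / ((k : ℝ) + 1)) ≤ (blockSens (f v) : ℝ)) ∧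
        ∃ c' : ℝ, 0 < c' ∧ ∀ v : ℕ, v₀ ≤ v →
          c' * (sens (f v) : ℝ) ^ (2 * (k : ℝ) / ((k : ℝ) + 1)) ≤ (blockSens (f v) : ℝ) := by
  obtain ⟨m, rfl⟩ := hko
  have hj : ((2 * m + 1 : ℕ) : ℝ) + 1 = 2 * ((m + 1 : ℕ) : ℝ) := by push_cast; ring
  simpa only [hj, mul_div_mul_left _ _ (two_ne_zero' ℝ)] using
    stmt15_general (k := 2 * m + 1) (j := m + 1) (by omega) (by omega)
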